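/- arXiv:2302.03686 — 4 statements merged into one kernel-verified Lean document; each statement's English description precedes it below -/
import Mathlib

section
/- Let p and q be strictly positive probability mass functions on a nonempty finite type α, let T > 0, and let b ∈ ℝ. Define the LHTS loss L_b(q) = -∑_x p(x) · exp(((1-T)/T)·log p(x) - b) · log q(x). Then (e^b / Z_{p_T}) · L_b(q) = KL(p_T ‖ q) + H(p_T). -/
/-!
Since `x * exp ((1 - T) / T * log x - b) = e^(-b) * x ^ (1 / T)`, the factor `e^b / Z_{p_T}` turns
the weights of the LHTS loss into `p_T`. The scaled loss is therefore the cross entropy of `q`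
relative to `p_T`, which splits as divergence plus entropy.
-/

namespace LHTS

open Real

variable {α : Type*} [Fintype α]

/-- The cross entropy `-∑ r log q` of a weight function `q` relative to a weight function `r`;
neither is required to be normalized. -/
noncomputable def crossEntropy (r q : α → ℝ) : ℝ :=
  -∑ x, r x * log (q x)

/-- The Shannon entropy `H(r)`, in nats, of a weight function on a finite type. -/
noncomputable def entropy (r : α → ℝ) : ℝ :=
  -∑ x, r x * log (r x)

/-- The Kullback–Leibler divergence `KL(r ‖ q)` as a real-valued finite sum. A term with
`r x ≠ 0` and `q x = 0` contributes `0` here, rather than the usual `∞`. -/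
noncomputable def klDivergence (r q : α → ℝ) : ℝ :=
  ∑ x, r x * log (r x / q x)

/-- The normalizing constant `Z_{p_T}` of the distribution `p` at temperature `T`. -/
noncomputable def partitionFunction (p : α → ℝ) (T : ℝ) : ℝ :=
  ∑ y, p y ^ (1 / T)

/-- The temperature-scaled distribution `p_T`. -/
noncomputable def tempered (p : α → ℝ) (T : ℝ) (x : α) : ℝ :=
  p x ^ (1 / T) / partitionFunction p T

/-- The LHTS loss `L_b(q)` with target `p`, temperature `T` and baseline `b`. -/
noncomputable def loss (p q : α → ℝ) (T b : ℝ) : ℝ :=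
  -∑ x, p x * exp ((1 - T) / T * log (p x) - b) * log (q x)

theorem crossEntropy_const_mul (c : ℝ) (r q : α → ℝ) :
    crossEntropy (fun x => c * r x) q = c * crossEntropy r q := by
  simp only [crossEntropy, mul_assoc, mul_neg, Finset.mul_sum]

theorem crossEntropy_eq_klDivergence_add_entropy {r q : α → ℝ} (h : ∀ x, q x = 0 → r x = 0) :
    crossEntropy r q = klDivergence r q + entropy r := by
  have log_ratio (x : α) :
      r x * log (r x / q x) = r x * log (r x) - r x * log (q x) := by
    by_cases hr : r x = 0
    · simp [hr]
    · rw [log_div hr (mt (h x) hr), mul_sub]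
  simp only [crossEntropy, klDivergence, entropy, log_ratio, Finset.sum_sub_distrib]
  ring

theorem mul_exp_mul_log_sub {x T : ℝ} (hx : 0 < x) (hT : T ≠ 0) (b : ℝ) :
    x * exp ((1 - T) / T * log x - b) = exp (-b) * x ^ (1 / T) := by
  have exponent : 1 / T = 1 + (1 - T) / T := by field_simp; ring
  calc x * exp ((1 - T) / T * log x - b)
      = exp (-b) * (x * x ^ ((1 - T) / T)) := by
        rw [rpow_def_of_pos hx, mul_comm (log x), sub_eq_add_neg, exp_add]
        ring
    _ = exp (-b) * x ^ (1 / T) := by rw [exponent, rpow_add hx, rpow_one]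

theorem loss_eq_exp_neg_mul_crossEntropy {p : α → ℝ} (hp : ∀ x, 0 < p x) (q : α → ℝ)
    {T : ℝ} (hT : T ≠ 0) (b : ℝ) :
    loss p q T b = exp (-b) * crossEntropy (fun x => p x ^ (1 / T)) q := by
  rw [← crossEntropy_const_mul]
  simp only [loss, crossEntropy, mul_exp_mul_log_sub (hp _) hT]

theorem crossEntropy_tempered (p q : α → ℝ) (T : ℝ) :
    crossEntropy (tempered p T) q =
      (partitionFunction p T)⁻¹ * crossEntropy (fun x => p x ^ (1 / T)) q := by
  rw [← crossEntropy_const_mul]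
  simp only [crossEntropy, tempered, div_eq_inv_mul]

theorem exp_div_partitionFunction_mul_loss {p : α → ℝ} (hp : ∀ x, 0 < p x) (q : α → ℝ)
    {T : ℝ} (hT : T ≠ 0) (b : ℝ) :
    exp b / partitionFunction p T * loss p q T b = crossEntropy (tempered p T) q := by
  rw [loss_eq_exp_neg_mul_crossEntropy hp q hT, crossEntropy_tempered, exp_neg]
  field_simp

end LHTS

open LHTS in
theorem lhts_loss_eq_kl_add_entropy_general {α : Type*} [Fintype α] [Nonempty α]
    {p q : α → ℝ} (hp : ∀ x, 0 < p x) (hq : ∀ x, 0 < q x) {T : ℝ} (hT : T ≠ 0) (b : ℝ) :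
    Real.exp b / partitionFunction p T * loss p q T b =
      klDivergence (tempered p T) q + entropy (tempered p T) := by
  rw [exp_div_partitionFunction_mul_loss hp q hT,
    crossEntropy_eq_klDivergence_add_entropy fun x hx => absurd hx (hq x).ne']

/-- **LHTS loss identity.** For strictly positive pmfs `p` and `q` on a nonempty finite
type, temperature `T > 0` and baseline `b`, the scaled LHTS loss
`(e^b / Z_{p_T}) · L_b(q)` equals `KL(p_T ‖ q) + H(p_T)`, where
`p_T x = p x ^ (1/T) / Z_{p_T}` and `Z_{p_T} = ∑ y, p y ^ (1/T)`. -/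
theorem lhts_loss_eq_kl_add_entropy
    {α : Type*} [Fintype α] [Nonempty α]
    (p q : α → ℝ) (hp : ∀ x, 0 < p x) (hq : ∀ x, 0 < q x)
    (hp1 : ∑ x, p x = 1) (hq1 : ∑ x, q x = 1)
    (T : ℝ) (hT : 0 < T) (b : ℝ) :
    (Real.exp b / ∑ y, p y ^ (1 / T)) *
        (-(∑ x, p x * Real.exp ((1 - T) / T * Real.log (p x) - b) * Real.log (q x)))
      = (∑ x, (p x ^ (1 / T) / ∑ y, p y ^ (1 / T)) *
            Real.log ((p x ^ (1 / T) / ∑ y, p y ^ (1 / T)) / q x))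
        + (-(∑ x, (p x ^ (1 / T) / ∑ y, p y ^ (1 / T)) *
            Real.log (p x ^ (1 / T) / ∑ y, p y ^ (1 / T)))) :=
  lhts_loss_eq_kl_add_entropy_general hp hq hT.ne' b
end

section
/- Let p be a strictly positive probability mass function on a nonempty finite type α, let T > 0, and let b ∈ ℝ. Define the LHTS loss L_b(q) = -∑_x p(x) · exp(((1-T)/T)·log p(x) - b) · log q(x) over strictly positive pmfs q on α. Then L_b is a strictly proper loss: for every strictly positive pmf q, L_b(q) ≥ L_b(p_T), with equality if and only if q = p_T. -/
/-!
The exponential weight and `p x` combine to `exp (-b) * p x ^ (1 / T)`, a multiple of `p_T x` by a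
positive factor independent of `x`. So the LHTS loss is a positive multiple of the cross-entropy
relative to `p_T`, and Gibbs' inequality with its equality case applies. Both parts of the latter
can be read off from the identity in which `∑ x, q x * klFun (r x / q x)`, whose terms are
nonnegative and vanish only where `q x = r x`, is the excess of the cross-entropy of `q` over that
of `r`, up to the difference of total masses.
-/

open InformationTheory Real

theorem mul_klFun_div {a b : ℝ} (hab : b = 0 → a = 0) :
    b * klFun (a / b) = a * log a - a * log b + (b - a) := by
  rcases eq_or_ne a 0 with rfl | ha
  · simp [klFun_zero]
  · have hb : b ≠ 0 := mt hab ha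
    rw [klFun_apply, log_div ha hb]
    field_simp
    ring

theorem mul_klFun_div_nonneg {a b : ℝ} (ha : 0 ≤ a) (hb : 0 ≤ b) : 0 ≤ b * klFun (a / b) :=
  mul_nonneg hb (klFun_nonneg (div_nonneg ha hb))

theorem eq_of_mul_klFun_div_eq_zero {a b : ℝ} (ha : 0 ≤ a) (hb : 0 ≤ b) (hab : b = 0 → a = 0)
    (h : b * klFun (a / b) = 0) : b = a := by
  rcases mul_eq_zero.1 h with hb0 | hkl
  · rw [hb0, hab hb0]
  · exact (eq_of_div_eq_one ((klFun_eq_zero_iff (div_nonneg ha hb)).1 hkl)).symm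

section CrossEntropy

variable {α : Type*} [Fintype α] {r q : α → ℝ}

/-- The cross-entropy `-∑ x, r x * log (q x)` of `q` relative to weights `r`, which need not sum to
`1`. Since `log 0 = 0` in Mathlib, it has its usual value only if `q x = 0` implies `r x = 0`. -/
noncomputable def crossEntropy (r q : α → ℝ) : ℝ :=
  -∑ x, r x * log (q x)

theorem crossEntropy_sub_crossEntropy_self (hqr : ∀ x, q x = 0 → r x = 0) :
    crossEntropy r q - crossEntropy r r =
      ∑ x, q x * klFun (r x / q x) + (∑ x, r x - ∑ x, q x) := by
  simp only [crossEntropy, mul_klFun_div (hqr _), Finset.sum_add_distrib, Finset.sum_sub_distrib]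
  ring

theorem crossEntropy_self_le (hr : ∀ x, 0 ≤ r x) (hq : ∀ x, 0 ≤ q x)
    (hqr : ∀ x, q x = 0 → r x = 0) (hsum : ∑ x, q x ≤ ∑ x, r x) :
    crossEntropy r r ≤ crossEntropy r q := by
  have hkl : 0 ≤ ∑ x, q x * klFun (r x / q x) :=
    Finset.sum_nonneg fun x _ => mul_klFun_div_nonneg (hr x) (hq x)
  linarith [crossEntropy_sub_crossEntropy_self hqr]

theorem crossEntropy_eq_crossEntropy_self_iff (hr : ∀ x, 0 ≤ r x) (hq : ∀ x, 0 ≤ q x)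
    (hqr : ∀ x, q x = 0 → r x = 0) (hsum : ∑ x, q x ≤ ∑ x, r x) :
    crossEntropy r q = crossEntropy r r ↔ q = r := by
  refine ⟨fun h => ?_, fun h => by rw [h]⟩
  have hnonneg : ∀ x ∈ Finset.univ, 0 ≤ q x * klFun (r x / q x) :=
    fun x _ => mul_klFun_div_nonneg (hr x) (hq x)
  have hkl : ∑ x, q x * klFun (r x / q x) = 0 :=
    le_antisymm (by linarith [crossEntropy_sub_crossEntropy_self hqr]) (Finset.sum_nonneg hnonneg)
  funext x
  exact eq_of_mul_klFun_div_eq_zero (hr x) (hq x) (hqr x)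
    ((Finset.sum_eq_zero_iff_of_nonneg hnonneg).1 hkl x (Finset.mem_univ x))

end CrossEntropy

section TemperatureScaling

variable {α : Type*} [Fintype α] {p : α → ℝ}

/-- The temperature-scaled distribution `p_T`: the weights `p x ^ (1 / T)`, normalised to sum
to `1`. -/
noncomputable def temperatureScale (p : α → ℝ) (T : ℝ) (x : α) : ℝ :=
  p x ^ (1 / T) / ∑ y, p y ^ (1 / T)

/-- The LHTS loss `L_b(q)` at temperature `T` with baseline `b`, for positive weights `p`, which
need not sum to `1`. -/
noncomputable def lhtsLoss (p : α → ℝ) (T b : ℝ) (q : α → ℝ) : ℝ :=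
  -∑ x, p x * exp ((1 - T) / T * log (p x) - b) * log (q x)

theorem sum_rpow_pos [Nonempty α] (hp : ∀ x, 0 < p x) (s : ℝ) : 0 < ∑ x, p x ^ s :=
  Finset.sum_pos (fun x _ => rpow_pos_of_pos (hp x) s) Finset.univ_nonempty

theorem temperatureScale_nonneg (hp : ∀ x, 0 ≤ p x) (T : ℝ) (x : α) : 0 ≤ temperatureScale p T x :=
  div_nonneg (rpow_nonneg (hp x) _) (Finset.sum_nonneg fun y _ => rpow_nonneg (hp y) _)

theorem sum_temperatureScale [Nonempty α] (hp : ∀ x, 0 < p x) (T : ℝ) :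
    ∑ x, temperatureScale p T x = 1 := by
  simp only [temperatureScale, ← Finset.sum_div]
  exact div_self (sum_rpow_pos hp _).ne'

theorem mul_exp_mul_log_sub {a T : ℝ} (ha : 0 < a) (hT : T ≠ 0) (b : ℝ) :
    a * exp ((1 - T) / T * log a - b) = exp (-b) * a ^ (1 / T) := by
  have hexponent : log a + ((1 - T) / T * log a - b) = -b + log a * (1 / T) := by
    field_simp
    ring
  calc a * exp ((1 - T) / T * log a - b)
      = exp (log a + ((1 - T) / T * log a - b)) := by rw [exp_add (log a), exp_log ha]
    _ = exp (-b) * a ^ (1 / T) := by rw [hexponent, exp_add, rpow_def_of_pos ha]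

theorem lhtsLoss_eq_mul_crossEntropy [Nonempty α] (hp : ∀ x, 0 < p x) {T : ℝ} (hT : T ≠ 0)
    (b : ℝ) (q : α → ℝ) :
    lhtsLoss p T b q =
      exp (-b) * (∑ x, p x ^ (1 / T)) * crossEntropy (temperatureScale p T) q := by
  have hZ : ∑ x, p x ^ (1 / T) ≠ 0 := (sum_rpow_pos hp _).ne'
  rw [lhtsLoss, crossEntropy, mul_neg, Finset.mul_sum]
  congr 1
  refine Finset.sum_congr rfl fun x _ => ?_
  rw [mul_exp_mul_log_sub (hp x) hT, temperatureScale]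
  field_simp

end TemperatureScaling

theorem lhts_loss_strictly_proper_general {α : Type*} [Fintype α] [Nonempty α]
    {p : α → ℝ} (hp : ∀ x, 0 < p x) {T : ℝ} (hT : T ≠ 0) (b : ℝ)
    {q : α → ℝ} (hq : ∀ x, 0 < q x) (hq1 : ∑ x, q x ≤ 1) :
    lhtsLoss p T b q ≥ lhtsLoss p T b (temperatureScale p T) ∧
      (lhtsLoss p T b q = lhtsLoss p T b (temperatureScale p T) ↔ q = temperatureScale p T) := by
  have hfactor : 0 < exp (-b) * ∑ x, p x ^ (1 / T) := mul_pos (exp_pos _) (sum_rpow_pos hp _)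
  have hpT : ∀ x, 0 ≤ temperatureScale p T x := temperatureScale_nonneg (fun x => (hp x).le) T
  have hq0 : ∀ x, 0 ≤ q x := fun x => (hq x).le
  have hsupp : ∀ x, q x = 0 → temperatureScale p T x = 0 := fun x h => absurd h (hq x).ne'
  have hsum : ∑ x, q x ≤ ∑ x, temperatureScale p T x :=
    hq1.trans_eq (sum_temperatureScale hp T).symm
  simp only [lhtsLoss_eq_mul_crossEntropy hp hT]
  exact ⟨mul_le_mul_of_nonneg_left (crossEntropy_self_le hpT hq0 hsupp hsum) hfactor.le,
    (mul_right_inj' hfactor.ne').trans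
      (crossEntropy_eq_crossEntropy_self_iff hpT hq0 hsupp hsum)⟩

/-- **Strict properness of the LHTS loss.** For a strictly positive pmf `p` on a nonempty
finite type, `T > 0` and baseline `b ∈ ℝ`, the LHTS loss
`L_b(q) = -∑ x, p x · exp(((1-T)/T)·log p x - b) · log (q x)`
over strictly positive pmfs `q` satisfies `L_b(q) ≥ L_b(p_T)` with equality iff `q = p_T`,
where `p_T x = p x ^ (1/T) / ∑ y, p y ^ (1/T)`. -/
theorem lhts_loss_strictly_proper
    {α : Type*} [Fintype α] [Nonempty α]
    (p : α → ℝ) (hp : ∀ x, 0 < p x) (hp1 : ∑ x, p x = 1)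
    (T : ℝ) (hT : 0 < T) (b : ℝ)
    (q : α → ℝ) (hq : ∀ x, 0 < q x) (hq1 : ∑ x, q x = 1) :
    (-(∑ x, p x * Real.exp ((1 - T) / T * Real.log (p x) - b) * Real.log (q x))
        ≥ -(∑ x, p x * Real.exp ((1 - T) / T * Real.log (p x) - b) *
              Real.log (p x ^ (1 / T) / ∑ y, p y ^ (1 / T))))
    ∧ ((-(∑ x, p x * Real.exp ((1 - T) / T * Real.log (p x) - b) * Real.log (q x))
        = -(∑ x, p x * Real.exp ((1 - T) / T * Real.log (p x) - b) *
              Real.log (p x ^ (1 / T) / ∑ y, p y ^ (1 / T))))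
        ↔ q = fun x => p x ^ (1 / T) / ∑ y, p y ^ (1 / T)) :=
  lhts_loss_strictly_proper_general hp hT.ne' b hq hq1.le
end

section
/- Let p be a strictly positive joint pmf on sequences x : Fin n → α (α a nonempty finite type, n ≥ 1), let T > 0, fix i : Fin n and a prefix w : Fin i → α. Then the weighted conditional loss q ↦ -∑_{x : x_{<i} = w} p(x_{≥i} | w) · exp(((1-T)/T)·log p(x_{≥i} | w)) · log q(x_i), taken over strictly positive pmfs q on α, is uniquely minimized at q = p_T(·|w), the conditional of the temperature-scaled joint distribution given the prefix w. -/
/-!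
Multiplying `p(x_{≥i} | w)` by `exp (((1-T)/T) log p(x_{≥i} | w))` raises it to the power `1/T`, so
the loss is a log loss whose weights on the sequences extending `w` are proportional to `p_T`.
Grouping those sequences by their symbol `x_i` turns such a loss into a positive multiple of the
cross entropy of `q` relative to the conditional law of `x_i` under the weights. That law depends
on the weights only up to scaling, so it is `p_T(· | w)`, and Gibbs' inequality concludes.
-/

open Finset InformationTheory

section Gibbs

lemma mul_klFun_div_s7 {s q : ℝ} (hqs : q = 0 → s = 0) :
    q * klFun (s / q) = s * Real.log s - s * Real.log q + (q - s) := by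
  rcases eq_or_ne s 0 with rfl | hs
  · simp [klFun_zero]
  · have hq : q ≠ 0 := mt hqs hs
    rw [klFun_apply, Real.log_div hs hq]
    field_simp
    ring

lemma mul_klFun_div_nonneg_s7 {s q : ℝ} (hs : 0 ≤ s) (hq : 0 ≤ q) : 0 ≤ q * klFun (s / q) :=
  mul_nonneg hq (klFun_nonneg (div_nonneg hs hq))

lemma eq_of_mul_klFun_div_eq_zero_s7 {s q : ℝ} (hs : 0 ≤ s) (hq : 0 ≤ q) (hqs : q = 0 → s = 0)
    (h : q * klFun (s / q) = 0) : q = s := by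
  rcases mul_eq_zero.mp h with hq0 | hkl
  · rw [hq0, hqs hq0]
  · exact (eq_of_div_eq_one ((klFun_eq_zero_iff (div_nonneg hs hq)).mp hkl)).symm

variable {ι : Type*} {t : Finset ι} {s q : ι → ℝ}

lemma sum_mul_klFun_div_le (hqs : ∀ a ∈ t, q a = 0 → s a = 0)
    (hsum : ∑ a ∈ t, q a ≤ ∑ a ∈ t, s a) :
    ∑ a ∈ t, q a * klFun (s a / q a) ≤
      ∑ a ∈ t, s a * Real.log (s a) - ∑ a ∈ t, s a * Real.log (q a) := by
  rw [sum_congr rfl fun a ha => mul_klFun_div_s7 (hqs a ha)]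
  simp only [sum_add_distrib, sum_sub_distrib]
  linarith

theorem sum_mul_log_le_sum_mul_log_self (hs : ∀ a ∈ t, 0 ≤ s a) (hq : ∀ a ∈ t, 0 ≤ q a)
    (hqs : ∀ a ∈ t, q a = 0 → s a = 0) (hsum : ∑ a ∈ t, q a ≤ ∑ a ∈ t, s a) :
    ∑ a ∈ t, s a * Real.log (q a) ≤ ∑ a ∈ t, s a * Real.log (s a) :=
  sub_nonneg.mp <|
    (sum_nonneg fun a ha => mul_klFun_div_nonneg_s7 (hs a ha) (hq a ha)).trans
      (sum_mul_klFun_div_le hqs hsum)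

theorem sum_mul_log_eq_sum_mul_log_self_iff (hs : ∀ a ∈ t, 0 ≤ s a) (hq : ∀ a ∈ t, 0 ≤ q a)
    (hqs : ∀ a ∈ t, q a = 0 → s a = 0) (hsum : ∑ a ∈ t, q a ≤ ∑ a ∈ t, s a) :
    ∑ a ∈ t, s a * Real.log (q a) = ∑ a ∈ t, s a * Real.log (s a) ↔ ∀ a ∈ t, q a = s a := by
  refine ⟨fun h a ha => ?_, fun h => sum_congr rfl fun a ha => by rw [h a ha]⟩
  have hnonneg : ∀ b ∈ t, 0 ≤ q b * klFun (s b / q b) :=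
    fun b hb => mul_klFun_div_nonneg_s7 (hs b hb) (hq b hb)
  have hzero : ∑ b ∈ t, q b * klFun (s b / q b) = 0 :=
    le_antisymm ((sum_mul_klFun_div_le hqs hsum).trans_eq (sub_eq_zero.mpr h.symm))
      (sum_nonneg hnonneg)
  exact eq_of_mul_klFun_div_eq_zero_s7 (hs a ha) (hq a ha) (hqs a ha)
    ((sum_eq_zero_iff_of_nonneg hnonneg).mp hzero a ha)

end Gibbs

section LogLoss

variable {X α : Type*} {C : Finset X} {f : X → α} {u : X → ℝ}

/-- The log loss `-∑_{x ∈ C} u x · log (r (f x))` of the prediction `r` for the label `f x`, where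
`x` ranges over the event `C` with weights `u`, which need not be normalized. -/
noncomputable def weightedLogLoss (C : Finset X) (f : X → α) (u : X → ℝ) (r : α → ℝ) : ℝ :=
  -∑ x ∈ C, u x * Real.log (r (f x))

variable [DecidableEq α]

/-- The law of the label `f x` conditional on `x ∈ C`, for `x` distributed proportionally to the
weights `u`. It is the junk value `0` when `C` has total weight `0`. -/
noncomputable def conditionalLaw (C : Finset X) (f : X → α) (u : X → ℝ) (a : α) : ℝ :=
  (∑ x ∈ C with f x = a, u x) / ∑ x ∈ C, u x

lemma conditionalLaw_nonneg (hu : ∀ x ∈ C, 0 ≤ u x) (a : α) : 0 ≤ conditionalLaw C f u a :=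
  div_nonneg (sum_nonneg fun x hx => hu x (mem_filter.mp hx).1) (sum_nonneg hu)

lemma conditionalLaw_div_const {c : ℝ} (hc : c ≠ 0) :
    conditionalLaw C f (fun x => u x / c) = conditionalLaw C f u := by
  funext a
  simp only [conditionalLaw, ← sum_div, div_div_div_cancel_right₀ hc]

lemma conditionalLaw_eq_zero {a : α} (h : ∀ x ∈ C, f x = a → u x = 0) :
    conditionalLaw C f u a = 0 := by
  rw [conditionalLaw, sum_eq_zero fun x hx => h x (mem_filter.mp hx).1 (mem_filter.mp hx).2,
    zero_div]

variable [Fintype α]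

lemma sum_conditionalLaw_mul (g : α → ℝ) :
    ∑ a, conditionalLaw C f u a * g a = (∑ x ∈ C, u x * g (f x)) / ∑ x ∈ C, u x := by
  simp only [conditionalLaw, div_mul_eq_mul_div, ← sum_div]
  rw [← sum_fiberwise C f fun x => u x * g (f x)]
  congr 1
  refine sum_congr rfl fun a _ => ?_
  rw [sum_mul]
  exact sum_congr rfl fun x hx => by rw [(mem_filter.mp hx).2]

lemma sum_conditionalLaw (hu : ∑ x ∈ C, u x ≠ 0) : ∑ a, conditionalLaw C f u a = 1 := by
  simpa [hu] using sum_conditionalLaw_mul (C := C) (f := f) (u := u) fun _ => 1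

lemma weightedLogLoss_eq_mul_sum_conditionalLaw (hu : ∑ x ∈ C, u x ≠ 0) (r : α → ℝ) :
    weightedLogLoss C f u r =
      -((∑ x ∈ C, u x) * ∑ a, conditionalLaw C f u a * Real.log (r a)) := by
  rw [sum_conditionalLaw_mul fun a => Real.log (r a), mul_div_cancel₀ _ hu, weightedLogLoss]

theorem conditionalLaw_minimizes_weightedLogLoss (hu : ∀ x ∈ C, 0 ≤ u x) (hC : 0 < ∑ x ∈ C, u x)
    {q : α → ℝ} (hq : ∀ a, 0 ≤ q a) (hq1 : ∑ a, q a ≤ 1)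
    (hqu : ∀ x ∈ C, q (f x) = 0 → u x = 0) :
    weightedLogLoss C f u (conditionalLaw C f u) ≤ weightedLogLoss C f u q ∧
      (weightedLogLoss C f u q = weightedLogLoss C f u (conditionalLaw C f u) ↔
        q = conditionalLaw C f u) := by
  have hs : ∀ a ∈ univ, 0 ≤ conditionalLaw C f u a := fun a _ => conditionalLaw_nonneg hu a
  have hqs : ∀ a ∈ univ, q a = 0 → conditionalLaw C f u a = 0 := fun a _ ha =>
    conditionalLaw_eq_zero fun x hx hfx => hqu x hx (by rw [hfx, ha])
  have hsum : ∑ a, q a ≤ ∑ a, conditionalLaw C f u a :=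
    hq1.trans_eq (sum_conditionalLaw hC.ne').symm
  simp only [weightedLogLoss_eq_mul_sum_conditionalLaw hC.ne', neg_le_neg_iff, neg_inj,
    mul_le_mul_iff_right₀ hC, mul_right_inj' hC.ne']
  refine ⟨sum_mul_log_le_sum_mul_log_self hs (fun a _ => hq a) hqs hsum, ?_⟩
  rw [sum_mul_log_eq_sum_mul_log_self_iff hs (fun a _ => hq a) hqs hsum]
  simp [funext_iff]

end LogLoss

section Temperature

/-- The distribution on `X` obtained from the positive weights `p` by scaling to temperature `T`:
`p ^ (1 / T)`, normalized. -/
noncomputable def temperatureScaled {X : Type*} [Fintype X] (T : ℝ) (p : X → ℝ) (x : X) : ℝ :=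
  p x ^ (1 / T) / ∑ y, p y ^ (1 / T)

lemma mul_exp_mul_log_eq_rpow {T y : ℝ} (hT : T ≠ 0) (hy : 0 < y) :
    y * Real.exp ((1 - T) / T * Real.log y) = y ^ (1 / T) := by
  have hexp : 1 / T = 1 + (1 - T) / T := by field_simp; ring
  rw [hexp, Real.rpow_add hy, Real.rpow_one, Real.rpow_def_of_pos hy, mul_comm (Real.log y)]

lemma conditionalLaw_temperatureScaled {X α : Type*} [Fintype X] [Nonempty X] [DecidableEq α]
    {p : X → ℝ} (hp : ∀ x, 0 < p x) (T : ℝ) (C : Finset X) (f : X → α) :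
    conditionalLaw C f (temperatureScaled T p) = conditionalLaw C f fun x => p x ^ (1 / T) :=
  conditionalLaw_div_const
    (sum_pos (fun y _ => Real.rpow_pos_of_pos (hp y) _) univ_nonempty).ne'

/-- Sequences are replaced by the elements of a finite type `X`, the extensions of the prefix `w`
by an arbitrary event `C`, and the symbol `x_i` by an arbitrary label `f x`. -/
theorem lhts_weighted_conditional_loss_minimizer_general
    {X α : Type*} [Fintype X] [Fintype α] [DecidableEq α]
    {p : X → ℝ} (hp : ∀ x, 0 < p x) {T : ℝ} (hT : T ≠ 0)
    {C : Finset X} (hC : C.Nonempty) (f : X → α)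
    {q : α → ℝ} (hq : ∀ a, 0 ≤ q a) (hqC : ∀ x ∈ C, q (f x) ≠ 0) (hq1 : ∑ a, q a ≤ 1) :
    let pC : X → ℝ := fun x => p x / ∑ y ∈ C, p y
    let qstar : α → ℝ := conditionalLaw C f (temperatureScaled T p)
    let L : (α → ℝ) → ℝ :=
      weightedLogLoss C f fun x => pC x * Real.exp ((1 - T) / T * Real.log (pC x))
    L qstar ≤ L q ∧ (L q = L qstar ↔ q = qstar) := by
  intro pC qstar L
  have hpC : 0 < ∑ y ∈ C, p y := sum_pos (fun y _ => hp y) hC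
  have hpos : ∀ x, 0 < pC x := fun x => div_pos (hp x) hpC
  have hL : L = weightedLogLoss C f fun x => pC x ^ (1 / T) := by
    simp only [L, mul_exp_mul_log_eq_rpow hT (hpos _)]
  have hqstar : qstar = conditionalLaw C f fun x => pC x ^ (1 / T) := by
    have : Nonempty X := hC.to_type
    simp only [qstar, pC, Real.div_rpow (hp _).le hpC.le]
    rw [conditionalLaw_temperatureScaled hp,
      conditionalLaw_div_const (Real.rpow_pos_of_pos hpC _).ne']
  rw [hL, hqstar]
  exact conditionalLaw_minimizes_weightedLogLoss (fun x _ => (Real.rpow_pos_of_pos (hpos x) _).le)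
    (sum_pos (fun x _ => Real.rpow_pos_of_pos (hpos x) _) hC) hq hq1
    fun x hx h => absurd h (hqC x hx)

end Temperature

lemma nonempty_filter_prefix_eq {α : Type*} [Fintype α] [Nonempty α] [DecidableEq α] {n m : ℕ}
    (hmn : m ≤ n) (w : Fin m → α) :
    ({x | (fun j : Fin m => x ⟨j, j.isLt.trans_le hmn⟩) = w} : Finset (Fin n → α)).Nonempty :=
  let ⟨x, hx⟩ := (Fin.castLE_injective hmn).surjective_comp_right w
  ⟨x, mem_filter.mpr ⟨mem_univ x, hx⟩⟩

/-- **The weighted conditional loss is uniquely minimized by the temperature-scaled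
conditional.** Fix `i : Fin n` and a prefix `w : Fin i → α`. Over strictly positive
pmfs `q` on `α`, the loss
`q ↦ -∑_{x : x_{<i} = w} p(x_{≥i}|w) · exp(((1-T)/T)·log p(x_{≥i}|w)) · log (q (x i))`
(with `p(x_{≥i}|w) = p x / p w`, `p w = ∑_{x : x_{<i} = w} p x`) is uniquely minimized
at `q = p_T(·|w)`, the conditional of the temperature-scaled joint distribution
`p_T x = p x ^ (1/T) / ∑ y, p y ^ (1/T)`, i.e.
`p_T(a|w) = (∑_{x : x_{<i} = w, x i = a} p_T x) / (∑_{x : x_{<i} = w} p_T x)`. -/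
theorem lhts_weighted_conditional_loss_minimizer
    {α : Type*} [Fintype α] [Nonempty α] [DecidableEq α] {n : ℕ} (hn : 1 ≤ n)
    (p : (Fin n → α) → ℝ) (hp : ∀ x, 0 < p x) (hp1 : ∑ x, p x = 1)
    (T : ℝ) (hT : 0 < T) (i : Fin n) (w : Fin (i : ℕ) → α)
    (q : α → ℝ) (hq : ∀ a, 0 < q a) (hq1 : ∑ a, q a = 1) :
    let pref : (Fin n → α) → Fin (i : ℕ) → α :=
      fun x j => x ⟨(j : ℕ), lt_trans j.isLt i.isLt⟩
    let pw : ℝ := ∑ x, if pref x = w then p x else 0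
    let psuf : (Fin n → α) → ℝ := fun x => p x / pw
    let pT : (Fin n → α) → ℝ := fun x => p x ^ (1 / T) / ∑ y, p y ^ (1 / T)
    let qstar : α → ℝ := fun a =>
      (∑ x, if pref x = w ∧ x i = a then pT x else 0) /
        (∑ x, if pref x = w then pT x else 0)
    let L : (α → ℝ) → ℝ := fun r =>
      -∑ x, (if pref x = w then
          psuf x * Real.exp ((1 - T) / T * Real.log (psuf x)) * Real.log (r (x i))
        else 0)
    L qstar ≤ L q ∧ (L q = L qstar ↔ q = qstar) := by
  simpa only [weightedLogLoss, conditionalLaw, temperatureScaled, filter_filter, sum_filter,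
    funext_iff (f := q)] using
    lhts_weighted_conditional_loss_minimizer_general hp hT.ne'
      (nonempty_filter_prefix_eq i.isLt.le w) (fun x => x i)
      (fun a => (hq a).le) (fun x _ => (hq (x i)).ne') hq1.le
end

section
/- Let p be a strictly positive pmf on a nonempty finite type α with a unique maximizer x* (i.e., p(x*) > p(x) for all x ≠ x*). Then as the temperature tends to 0 from above, the temperature-scaled distribution concentrates on the argmax: the function T ↦ p(x*)^{1/T} / ∑_y p(y)^{1/T} tends to 1 as T → 0⁺. -/
open Filter Topology

/-!
Put `s = 1 / T → ∞` and divide by `p(x*)^s`: the probability of `x*` becomes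
`(∑ y, (p y / p x*) ^ s)⁻¹`. Each ratio lies in `[0, 1]`, so its `s`-th power tends to `1` where
`p y = p x*` and to `0` elsewhere, and for `s ≥ 1` it is at most the ratio itself. Dominated
convergence then lets the sum tend to the number of maximizers of `p`, even for infinitely many
atoms.
-/

section UniqueMaximizer

variable {α β : Type*} [Preorder β] {f : α → β} {a : α}

theorem setOf_eq_eq_singleton_of_forall_ne_lt (h : ∀ x, x ≠ a → f x < f a) :
    {x | f x = f a} = {a} :=
  Set.eq_singleton_iff_unique_mem.mpr ⟨rfl, fun x hx => by_contra fun hne => (h x hne).ne hx⟩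

theorem apply_le_of_forall_ne_lt (h : ∀ x, x ≠ a → f x < f a) (x : α) : f x ≤ f a := by
  rcases eq_or_ne x a with rfl | hne
  · exact le_rfl
  · exact (h x hne).le

end UniqueMaximizer

theorem tendsto_rpow_atTop_indicator_one {r : ℝ} (h₀ : -1 < r) (h₁ : r ≤ 1) :
    Tendsto (fun s : ℝ => r ^ s) atTop (𝓝 (Set.indicator {1} 1 r)) := by
  rcases h₁.eq_or_lt with rfl | hlt
  · simp
  · simpa [hlt.ne] using tendsto_rpow_atTop_of_base_lt_one r h₀ hlt

section

variable {α : Type*}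

theorem finite_setOf_eq_of_summable {E : Type*} [AddCommGroup E] [TopologicalSpace E]
    [IsTopologicalAddGroup E] [T1Space E] {f : α → E} (hf : Summable f) {c : E} (hc : c ≠ 0) :
    {x | f x = c}.Finite := by
  have hne : ∀ᶠ x in cofinite, f x ≠ c := hf.tendsto_cofinite_zero.eventually_ne hc.symm
  simpa [eventually_cofinite] using hne

-- For infinite `s` both sides take the junk value `0`.
theorem tsum_indicator_one_eq_ncard {R : Type*} [AddCommGroupWithOne R] [TopologicalSpace R]
    [IsTopologicalAddGroup R] [T2Space R] (s : Set α) :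
    ∑' x, s.indicator (1 : α → R) x = s.ncard := by
  rw [← tsum_subtype s (1 : α → R)]
  simp [Set.ncard_def]

theorem tendsto_tsum_rpow_atTop_ncard {r : α → ℝ} (h₀ : ∀ x, 0 ≤ r x) (h₁ : ∀ x, r x ≤ 1)
    (hr : Summable r) :
    Tendsto (fun s : ℝ => ∑' x, r x ^ s) atTop (𝓝 ({x | r x = 1}.ncard : ℝ)) := by
  rw [← tsum_indicator_one_eq_ncard]
  refine tendsto_tsum_of_dominated_convergence hr
    (fun x => tendsto_rpow_atTop_indicator_one (neg_one_lt_zero.trans_le (h₀ x)) (h₁ x)) ?_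
  filter_upwards [eventually_ge_atTop 1] with s hs x
  rw [Real.norm_of_nonneg (Real.rpow_nonneg (h₀ x) s)]
  exact Real.rpow_le_self_of_le_one (h₀ x) (h₁ x) hs

theorem rpow_div_tsum_rpow {p : α → ℝ} (hp : ∀ x, 0 ≤ p x) (x : α) (s : ℝ) :
    p x ^ s / ∑' y, p y ^ s = (∑' y, (p y / p x) ^ s)⁻¹ := by
  simp only [Real.div_rpow (hp _) (hp x), tsum_div_const, inv_div]

theorem tendsto_rpow_div_tsum_rpow_atTop {p : α → ℝ} (hp : ∀ x, 0 ≤ p x) (hsum : Summable p)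
    {xstar : α} (hpos : 0 < p xstar) (hmax : ∀ x, p x ≤ p xstar) :
    Tendsto (fun s : ℝ => p xstar ^ s / ∑' y, p y ^ s) atTop
      (𝓝 ({x | p x = p xstar}.ncard : ℝ)⁻¹) := by
  have hratio : Tendsto (fun s : ℝ => ∑' y, (p y / p xstar) ^ s) atTop
      (𝓝 ({x | p x = p xstar}.ncard : ℝ)) := by
    simpa only [div_eq_one_iff_eq hpos.ne'] using
      tendsto_tsum_rpow_atTop_ncard (fun y => div_nonneg (hp y) hpos.le)
        (fun y => div_le_one_of_le₀ (hmax y) hpos.le) (hsum.div_const (p xstar))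
  have hcard : {x | p x = p xstar}.ncard ≠ 0 :=
    Set.ncard_ne_zero_of_mem rfl (finite_setOf_eq_of_summable hsum hpos.ne')
  simpa only [rpow_div_tsum_rpow hp] using hratio.inv₀ (Nat.cast_ne_zero.mpr hcard)

theorem temp_scaled_tendsto_argmax_general {p : α → ℝ} (hp : ∀ x, 0 ≤ p x) (hsum : Summable p)
    {xstar : α} (hpos : 0 < p xstar) (hmax : ∀ x, p x ≤ p xstar) :
    Tendsto (fun T : ℝ => p xstar ^ (1 / T) / ∑' y, p y ^ (1 / T)) (𝓝[>] 0)
      (𝓝 ({x | p x = p xstar}.ncard : ℝ)⁻¹) := by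
  simpa only [one_div, Function.comp_def] using
    (tendsto_rpow_div_tsum_rpow_atTop hp hsum hpos hmax).comp tendsto_inv_nhdsGT_zero

end

/-- **Temperature → 0 concentrates on the argmax.** Let `p` be a strictly positive pmf
on a nonempty finite type with a unique maximizer `x*`. Then
`p_T(x*) = p(x*)^(1/T) / ∑ y, p(y)^(1/T) → 1` as `T → 0⁺`. -/
theorem temp_scaled_tendsto_argmax
    {α : Type*} [Fintype α] [Nonempty α]
    (p : α → ℝ) (hp : ∀ x, 0 < p x) (hp1 : ∑ x, p x = 1)
    (xstar : α) (hmax : ∀ x, x ≠ xstar → p x < p xstar) :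
    Tendsto (fun T : ℝ => p xstar ^ (1 / T) / ∑ y, p y ^ (1 / T))
      (𝓝[>] 0) (𝓝 1) := by
  simpa [setOf_eq_eq_singleton_of_forall_ne_lt hmax] using temp_scaled_tendsto_argmax_general
    (fun x => (hp x).le) Summable.of_finite (hp xstar) (apply_le_of_forall_ne_lt hmax)
end
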